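/- Let k ≥ 0 be an integer and let G be a simple graph of order n ≥ max{6k+11, (k+3)(k+4)/2}. If e(G) ≥ C(n−k−1, 2) + C(k+2, 2), then G is weakly pancyclic with girth 3, and moreover one of the following holds: (a) G contains a cycle C_ℓ for every integer ℓ with 3 ≤ ℓ ≤ n−k; or (b) G is isomorphic to L_{n,k+1} = K_1 ∨ (K_{n−k−2} + K_{k+1}). -/

import Mathlib

open SimpleGraph

/-- `G` contains a cycle of length `l`. -/
def HasCycleLen {V : Type} (G : SimpleGraph V) (l : ℕ) : Prop :=
  ∃ (v : V) (c : G.Walk v v), c.IsCycle ∧ c.length = l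

/-- The circumference of `G`: the length of a longest cycle. -/
noncomputable def circumference {V : Type} (G : SimpleGraph V) : ℕ :=
  sSup {l | HasCycleLen G l}

/-- `G` is weakly pancyclic with girth 3: it contains a cycle of every length `l`
with `3 ≤ l ≤ c(G)`. -/
def WeaklyPancyclic3 {V : Type} (G : SimpleGraph V) : Prop :=
  HasCycleLen G 3 ∧ ∀ l : ℕ, 3 ≤ l → l ≤ circumference G → HasCycleLen G l

/-- The number of edges of `G`. -/
noncomputable def edgeCount {V : Type} (G : SimpleGraph V) : ℕ :=
  Nat.card G.edgeSet

/-- The degree of `v` in `G`. -/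
noncomputable def degCount {V : Type} (G : SimpleGraph V) (v : V) : ℕ :=
  Nat.card (G.neighborSet v)

/-- The spectral radius of `G`: the largest eigenvalue of the adjacency matrix. -/
noncomputable def specRad {V : Type} [Finite V] (G : SimpleGraph V) : ℝ :=
  letI := Fintype.ofFinite V
  letI := Classical.decEq V
  letI := Classical.decRel G.Adj
  sSup (spectrum ℝ (G.adjMatrix ℝ))

/-- The signless Laplacian spectral radius of `G`: the largest eigenvalue of `D(G) + A(G)`. -/
noncomputable def qSpecRad {V : Type} [Finite V] (G : SimpleGraph V) : ℝ :=
  letI := Fintype.ofFinite V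
  letI := Classical.decEq V
  letI := Classical.decRel G.Adj
  sSup (spectrum ℝ (Matrix.diagonal (fun v => (degCount G v : ℝ)) + G.adjMatrix ℝ))

/-- `L_{n,k} = K_1 ∨ (K_{n-k-1} + K_k)`: vertex `0` is the common vertex of a clique on
the `n - k` vertices `{0, …, n-k-1}` and a clique on the `k+1` vertices `{0} ∪ {n-k, …, n-1}`. -/
def Lgraph (n k : ℕ) : SimpleGraph (Fin n) :=
  SimpleGraph.fromRel (fun u v =>
    u.val = 0 ∨ v.val = 0 ∨ (u.val < n - k ∧ v.val < n - k) ∨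
      (n - k ≤ u.val ∧ n - k ≤ v.val))

/-- `Γ_{n,t} = K_2 ∨ (K_{n-2-t} + t·K_1)`: vertices `0,1` are joined to everything,
vertices `2, …, n-t-1` form a clique, and vertices `n-t, …, n-1` are independent. -/
def GammaGraph (n t : ℕ) : SimpleGraph (Fin n) :=
  SimpleGraph.fromRel (fun u v =>
    u.val < 2 ∨ v.val < 2 ∨ (u.val < n - t ∧ v.val < n - t))

/-- `F` is a member of the family `F_{n,k}`: there is a clique `K` on `n - k` vertices
such that each connected component of `F - K` is a clique all of whose vertices are
adjacent to one single common vertex of `K` and to no other vertex of `K`. -/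
def MemF (n k : ℕ) (F : SimpleGraph (Fin n)) : Prop :=
  ∃ K : Finset (Fin n), K.card = n - k ∧ F.IsClique (↑K : Set (Fin n)) ∧
    (∀ u v : ({x : Fin n | x ∉ K} : Set (Fin n)),
      (F.induce {x : Fin n | x ∉ K}).Reachable u v → (u = v ∨ F.Adj u.1 v.1)) ∧
    (∀ u : ({x : Fin n | x ∉ K} : Set (Fin n)), ∃! w : Fin n, w ∈ K ∧ F.Adj u.1 w) ∧
    (∀ u v : ({x : Fin n | x ∉ K} : Set (Fin n)),
      (F.induce {x : Fin n | x ∉ K}).Reachable u v →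
        ∀ w ∈ K, F.Adj u.1 w → F.Adj v.1 w)

/-- `G` is a subgraph of `H` (up to relabelling): there is an injective graph
homomorphism from `G` to `H`. -/
def IsSubgraphOf {n : ℕ} (G H : SimpleGraph (Fin n)) : Prop :=
  ∃ f : G →g H, Function.Injective f

/-!
Remove a vertex of minimum degree as long as that degree is small. If at some stage all degrees are
large, a theorem of Erdős, proved here by the closure argument of Bondy–Chvátal and Pósa, makes the
remaining graph Hamiltonian, and its Hamiltonian cycle is long in `G`. Otherwise the edge count
forces the bottom graph to be complete. Restoring the removed vertices one at a time, the extra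
vertex either extends a Hamiltonian cycle of the large clique or keeps the shape `L_{n,k}`.

If the circumference `c` is at least `n - k`, then `G` misses so few edges that two consecutive
vertices of a longest cycle have fewer than `c - 2` non-neighbours in total, and by the pigeonhole
principle their chords give cycles of every length up to `c`.
-/

section Sequences

variable {V : Type} {G : SimpleGraph V}

/-- The vertices `p 0, …, p m` form a path of length `m` in `G`. Only these values of `p` matter;
indexing by `ℕ` leaves the arithmetic on positions free of casts. -/
structure IsPathSeq (G : SimpleGraph V) (m : ℕ) (p : ℕ → V) : Prop where
  injOn : Set.InjOn p (Set.Iic m)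
  adj : ∀ t < m, G.Adj (p t) (p (t + 1))

/-- The sequence `f` runs periodically around a cycle of length `l` of `G`, so that changing the
starting point of the cycle is a shift of `f`. -/
structure IsCycleSeq (G : SimpleGraph V) (l : ℕ) (f : ℕ → V) : Prop where
  eq_iff : ∀ s t, f s = f t ↔ s ≡ t [MOD l]
  adj : ∀ t, G.Adj (f t) (f (t + 1))

lemma hasCycleLen_iff_isContained {l : ℕ} (hl : 3 ≤ l) :
    HasCycleLen G l ↔ cycleGraph l ⊑ G :=
  (cycleGraph_isContained_iff hl).symm

lemma HasCycleLen.three_le {l : ℕ} : HasCycleLen G l → 3 ≤ l := by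
  rintro ⟨v, c, hc, rfl⟩
  exact hc.three_le_length

lemma HasCycleLen.of_isContained {W : Type} {H : SimpleGraph W} {l : ℕ} (h : HasCycleLen G l)
    (hGH : G ⊑ H) : HasCycleLen H l :=
  (hasCycleLen_iff_isContained h.three_le).2
    (((hasCycleLen_iff_isContained h.three_le).1 h).trans hGH)

lemma HasCycleLen.le_card [Fintype V] {l : ℕ} (h : HasCycleLen G l) : l ≤ Fintype.card V := by
  obtain ⟨φ⟩ := (hasCycleLen_iff_isContained h.three_le).1 h
  simpa using Fintype.card_le_of_injective φ φ.injective

lemma HasCycleLen.exists_isCycleSeq {l : ℕ} (h : HasCycleLen G l) :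
    ∃ f, IsCycleSeq G l f := by
  have hl := h.three_le
  obtain ⟨φ⟩ := (hasCycleLen_iff_isContained hl).1 h
  obtain ⟨m, rfl⟩ : ∃ m, l = m + 2 := ⟨l - 2, by lia⟩
  refine ⟨fun t => φ (Fin.ofNat (m + 2) t), fun s t => ?_, fun t => φ.toHom.map_adj ?_⟩
  · exact (φ.injective.eq_iff (a := Fin.ofNat _ s)).trans Fin.ext_iff
  · exact cycleGraph_adj.2 (.inr (sub_eq_of_eq_add' (Fin.ext (by simp [Fin.val_add]))))

lemma IsPathSeq.hasCycleLen {m : ℕ} {p : ℕ → V} (hp : IsPathSeq G m p) (hm : 2 ≤ m)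
    (hclose : G.Adj (p m) (p 0)) : HasCycleLen G (m + 1) := by
  have hsucc (i : Fin (m + 1)) : G.Adj (p i) (p ((i + 1 : Fin (m + 1)))) := by
    rw [Fin.val_add_one]
    split_ifs with hi
    · simpa [hi] using hclose
    · exact hp.adj i (Fin.val_lt_last hi)
  obtain ⟨m, rfl⟩ : ∃ k, m = k + 1 := ⟨m - 1, by lia⟩
  refine (hasCycleLen_iff_isContained (by lia)).2 ⟨⟨⟨fun i => p i, fun {i j} hij => ?_⟩, ?_⟩⟩
  · rcases cycleGraph_adj.1 hij with h | h
    · exact eq_add_of_sub_eq' h ▸ (hsucc j).symm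
    · exact eq_add_of_sub_eq' h ▸ hsucc i
  · intro i j hij
    exact Fin.ext (hp.injOn i.is_le j.is_le hij)

lemma IsPathSeq.segment {m r : ℕ} {p : ℕ → V} (hp : IsPathSeq G m p) (a : ℕ) (h : a + r ≤ m) :
    IsPathSeq G r (fun t => p (a + t)) where
  injOn _ hs _ ht hst := Nat.add_left_cancel <|
    hp.injOn (h.trans' (Nat.add_le_add_left hs a)) (h.trans' (Nat.add_le_add_left ht a)) hst
  adj t ht := hp.adj (a + t) (by lia)

lemma IsPathSeq.cons {m : ℕ} {p : ℕ → V} (hp : IsPathSeq G m p) {v : V}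
    (hv : ∀ t ≤ m, p t ≠ v) (hadj : G.Adj v (p 0)) :
    IsPathSeq G (m + 1) (fun t => t.casesOn v p) where
  injOn := by
    rintro (_ | s) hs (_ | t) ht hst
    · rfl
    · exact absurd hst.symm (hv t (Nat.succ_le_succ_iff.1 ht))
    · exact absurd hst (hv s (Nat.succ_le_succ_iff.1 hs))
    · exact congrArg _ (hp.injOn (Nat.succ_le_succ_iff.1 hs) (Nat.succ_le_succ_iff.1 ht) hst)
  adj := by
    rintro (_ | t) ht
    · exact hadj
    · exact hp.adj t (by lia)

lemma IsCycleSeq.shift {l : ℕ} {f : ℕ → V} (hf : IsCycleSeq G l f) (a : ℕ) :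
    IsCycleSeq G l (fun t => f (a + t)) where
  eq_iff _ _ := (hf.eq_iff _ _).trans (Nat.ModEq.add_iff_left rfl)
  adj t := hf.adj (a + t)

lemma IsCycleSeq.add_period {l : ℕ} {f : ℕ → V} (hf : IsCycleSeq G l f) (t : ℕ) :
    f (t + l) = f t :=
  (hf.eq_iff _ _).2 (Nat.add_mod_right t l)

lemma IsCycleSeq.injOn_Iio {l : ℕ} {f : ℕ → V} (hf : IsCycleSeq G l f) :
    Set.InjOn f (Set.Iio l) :=
  fun _ hs _ ht hst => ((hf.eq_iff _ _).1 hst).eq_of_lt_of_lt hs ht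

lemma IsCycleSeq.isPathSeq {m : ℕ} {f : ℕ → V} (hf : IsCycleSeq G (m + 1) f) :
    IsPathSeq G m f where
  injOn _ hs _ ht := hf.injOn_Iio (Nat.lt_succ_of_le hs) (Nat.lt_succ_of_le ht)
  adj t _ := hf.adj t

lemma IsCycleSeq.adj_last_zero {m : ℕ} {f : ℕ → V} (hf : IsCycleSeq G (m + 1) f) :
    G.Adj (f m) (f 0) := by
  have hper := hf.add_period 0
  rw [zero_add] at hper
  exact hper ▸ hf.adj m

/-- The cycle is `p 0, …, p i, p m, p (m - 1), …, p j`. -/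
lemma IsPathSeq.hasCycleLen_of_crossing {m i j : ℕ} {p : ℕ → V} (hp : IsPathSeq G m p)
    (hij : i < j) (hj : j ≤ m) (h0 : G.Adj (p 0) (p j)) (hm : G.Adj (p m) (p i))
    (h3 : 2 ≤ i + (m - j + 1)) : HasCycleLen G (i + (m - j + 1) + 1) := by
  let σ : ℕ → ℕ := fun t => if t ≤ i then t else m + i + 1 - t
  have hσ : IsPathSeq G (i + (m - j + 1)) (p ∘ σ) := by
    refine ⟨hp.injOn.comp (fun s hs t ht hst => ?_) fun t _ => ?_, fun t ht => ?_⟩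
    · grind
    · grind
    · rcases lt_trichotomy t i with h | rfl | h
      · simpa [σ, h, h.le] using hp.adj t (by lia)
      · simpa [σ] using hm.symm
      · have hrev := (hp.adj (m + i - t) (by lia)).symm
        have e : m + i - t + 1 = m + i + 1 - t := by lia
        simpa [σ, h.not_ge, (h.trans t.lt_succ_self).not_ge, e] using hrev
  refine hσ.hasCycleLen h3 ?_
  have hlast : σ (i + (m - j + 1)) = j := by grind
  have hfirst : σ 0 = 0 := if_pos i.zero_le
  simpa only [Function.comp_apply, hlast, hfirst] using h0.symm

/-- The cycle is `p m, p 0, p j, p (j + 1), …, p (j + r)`. -/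
lemma IsPathSeq.hasCycleLen_of_shortcut {m j r : ℕ} {p : ℕ → V} (hp : IsPathSeq G m p)
    (hj : 1 ≤ j) (hjm : j + r < m) (hclose : G.Adj (p m) (p 0)) (h0 : G.Adj (p 0) (p j))
    (hm : G.Adj (p m) (p (j + r))) : HasCycleLen G (r + 3) := by
  have hne : ∀ s ≤ m, ∀ t ≤ m, s ≠ t → p s ≠ p t := fun s hs t ht => (hp.injOn.ne_iff hs ht).2
  have harc := (hp.segment (r := r) j (by lia)).cons
    (fun t ht => hne (j + t) (by lia) 0 (by lia) (by lia)) h0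
  refine (harc.cons ?_ hclose).hasCycleLen (by lia) hm.symm
  rintro (_ | t) ht
  · exact hne 0 (by lia) m le_rfl (by lia)
  · exact hne (j + t) (by lia) m le_rfl (by lia)

end Sequences

open scoped Finset

section Cliques

variable {V : Type} {G : SimpleGraph V} {Q : Finset V} {a b v w : V}

lemma exists_isPathSeq_of_isClique (hQ : G.IsClique Q) (ha : a ∈ Q) (hb : b ∈ Q)
    (hab : a ≠ b) {m : ℕ} (hm : 1 ≤ m) (hmQ : m < #Q) :
    ∃ p, IsPathSeq G m p ∧ p 0 = a ∧ p m = b ∧ ∀ t ≤ m, p t ∈ Q := by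
  classical
  induction m, hm using Nat.le_induction generalizing Q a with
  | base =>
    have hsingle : IsPathSeq G 0 fun _ => b := ⟨fun s hs t ht _ => by grind, fun _ h => by lia⟩
    refine ⟨_, hsingle.cons (fun _ _ => hab.symm) (hQ ha hb hab), rfl, rfl, ?_⟩
    rintro (_ | _) _ <;> assumption
  | succ m hm ih =>
    obtain ⟨c, hc⟩ : ((Q.erase a).erase b).Nonempty := by
      rw [← Finset.card_pos, Finset.card_erase_of_mem (Finset.mem_erase.2 ⟨hab.symm, hb⟩),
        Finset.card_erase_of_mem ha]
      lia
    simp only [Finset.mem_erase] at hc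
    obtain ⟨p, hp, hp0, hpm, hpQ⟩ := ih (Q := Q.erase a) (a := c)
      (hQ.subset (by simp)) (by simp [hc]) (by simp [hb, hab.symm]) hc.1
      (by rw [Finset.card_erase_of_mem ha]; lia)
    refine ⟨_, hp.cons (fun t ht => Finset.ne_of_mem_erase (hpQ t ht))
      (hp0 ▸ hQ ha hc.2.2 hc.2.1.symm), rfl, hpm, ?_⟩
    rintro (_ | t) ht
    · exact ha
    · exact Finset.mem_of_mem_erase (hpQ t (by lia))

lemma hasCycleLen_of_isClique (hQ : G.IsClique Q) {l : ℕ} (hl : 3 ≤ l) (hlQ : l ≤ #Q) :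
    HasCycleLen G l := by
  obtain ⟨a, ha, b, hb, hab⟩ := Finset.one_lt_card.1 (by lia : 1 < #Q)
  obtain ⟨p, hp, rfl, rfl, -⟩ := exists_isPathSeq_of_isClique hQ ha hb hab
    (m := l - 1) (by lia) (by lia)
  obtain ⟨m, rfl⟩ : ∃ m, l = m + 1 := ⟨l - 1, by lia⟩
  exact hp.hasCycleLen (by lia) (hQ hb ha hab.symm)

lemma hasCycleLen_card_add_one_of_isClique (hQ : G.IsClique Q) (ha : a ∈ Q) (hb : b ∈ Q)
    (hab : a ≠ b) (hv : v ∉ Q) (hva : G.Adj v a) (hvb : G.Adj v b) : HasCycleLen G (#Q + 1) := by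
  have hcard := Finset.one_lt_card.2 ⟨a, ha, b, hb, hab⟩
  obtain ⟨p, hp, rfl, rfl, hpQ⟩ := exists_isPathSeq_of_isClique hQ ha hb hab
    (m := #Q - 1) (by lia) (by lia)
  have hcyc := (hp.cons (fun t ht => ne_of_mem_of_not_mem (hpQ t ht) hv) hva).hasCycleLen
    (by lia) hvb.symm
  rwa [Nat.sub_add_cancel hcard.le] at hcyc

/-- The cycle closes a path through all of `Q` with the ear `b w v a`. -/
lemma hasCycleLen_card_add_two_of_isClique (hQ : G.IsClique Q) (ha : a ∈ Q) (hb : b ∈ Q)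
    (hab : a ≠ b) (hv : v ∉ Q) (hw : w ∉ Q) (hva : G.Adj v a) (hwv : G.Adj w v)
    (hwb : G.Adj w b) : HasCycleLen G (#Q + 2) := by
  have hcard := Finset.one_lt_card.2 ⟨a, ha, b, hb, hab⟩
  obtain ⟨p, hp, rfl, rfl, hpQ⟩ := exists_isPathSeq_of_isClique hQ ha hb hab
    (m := #Q - 1) (by lia) (by lia)
  have hear := hp.cons (fun t ht => ne_of_mem_of_not_mem (hpQ t ht) hv) hva
  have hcyc := (hear.cons (v := w) ?_ hwv).hasCycleLen (by lia) hwb.symm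
  · rwa [Nat.sub_add_cancel hcard.le] at hcyc
  · rintro (_ | t) ht
    · exact hwv.ne'
    · exact ne_of_mem_of_not_mem (hpQ t (by lia)) hw

end Cliques

section Closure

variable {V : Type} [Fintype V] [DecidableEq V] {G : SimpleGraph V} [DecidableRel G.Adj]

lemma exists_adj_and_adj_of_degree_compl_add_lt {ι : Type*} {I : Finset ι}
    {φ ψ : ι → V} {u v : V} (hφ : Set.InjOn φ I) (hψ : Set.InjOn ψ I) (hu : ∀ i ∈ I, φ i ≠ u)
    (hv : ∀ i ∈ I, ψ i ≠ v) (hlt : Gᶜ.degree u + Gᶜ.degree v < #I) :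
    ∃ i ∈ I, G.Adj u (φ i) ∧ G.Adj v (ψ i) := by
  classical
  have hcard {χ : ι → V} {w : V} (hχ : Set.InjOn χ I) (hw : ∀ i ∈ I, χ i ≠ w) :
      #{i ∈ I | ¬ G.Adj w (χ i)} ≤ Gᶜ.degree w := by
    refine Finset.card_le_card_of_injOn χ (fun i hi => ?_)
      (hχ.mono (Finset.coe_subset.2 (Finset.filter_subset _ _)))
    obtain ⟨hi, hadj⟩ := Finset.mem_filter.1 hi
    simpa [hadj] using (hw i hi).symm
  by_contra! hnone
  have hcover : I ⊆ {i ∈ I | ¬ G.Adj u (φ i)} ∪ {i ∈ I | ¬ G.Adj v (ψ i)} := by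
    intro i hi
    by_cases h : G.Adj u (φ i) <;> simp [hi, h, hnone i hi]
  exact absurd (((Finset.card_le_card hcover).trans (Finset.card_union_le _ _)).trans
    (add_le_add (hcard hφ hu) (hcard hψ hv))) hlt.not_ge

lemma IsPathSeq.hasCycleLen_of_degree_compl_add_lt {m : ℕ} {p : ℕ → V} (hp : IsPathSeq G m p)
    (hm : 2 ≤ m) (hdeg : Gᶜ.degree (p 0) + Gᶜ.degree (p m) < m) : HasCycleLen G (m + 1) := by
  obtain ⟨i, hi, h0, hlast⟩ := exists_adj_and_adj_of_degree_compl_add_lt (G := G)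
    (I := Finset.range m) (φ := fun i => p (i + 1)) (ψ := p) (u := p 0) (v := p m)
    (fun i hi j hj hij => by
      simpa using hp.injOn (Finset.mem_range.1 hi) (Finset.mem_range.1 hj) hij)
    (hp.injOn.mono fun i hi => (Finset.mem_range.1 hi).le)
    (fun i hi h => by simpa using hp.injOn (Finset.mem_range.1 hi) m.zero_le h)
    (fun i hi h => by
      have hlt := Finset.mem_range.1 hi
      exact hlt.ne (hp.injOn hlt.le (Set.mem_Iic.2 le_rfl) h))
    (by simpa using hdeg)
  have hlt := Finset.mem_range.1 hi
  convert hp.hasCycleLen_of_crossing i.lt_succ_self hlt h0 hlast (by lia) using 1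
  lia

/-- The step of the Bondy–Chvátal closure, for cycles of arbitrary length. -/
lemma HasCycleLen.of_sup_edge {u v : V} {l : ℕ} (h : HasCycleLen (G ⊔ edge u v) l)
    (hdeg : Gᶜ.degree u + Gᶜ.degree v + 2 ≤ l) : HasCycleLen G l := by
  have hl := h.three_le
  obtain ⟨m, rfl⟩ : ∃ m, l = m + 1 := ⟨l - 1, by lia⟩
  obtain ⟨f, hf⟩ := h.exists_isCycleSeq
  by_cases hG : ∀ t, G.Adj (f t) (f (t + 1))
  · have hfG : IsCycleSeq G (m + 1) f := ⟨hf.eq_iff, hG⟩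
    exact hfG.isPathSeq.hasCycleLen (by lia) hfG.adj_last_zero
  push Not at hG
  obtain ⟨s, hs⟩ := hG
  have hends {t : ℕ} (ht : ¬ G.Adj (f t) (f (t + 1))) : s(f t, f (t + 1)) = s(u, v) := by
    rw [Sym2.eq_iff]
    exact ((edge_adj ..).1 ((hf.adj t).resolve_left ht)).1
  let g := fun t => f (s + 1 + t)
  have hinj : Set.InjOn g (Set.Iic m) := (hf.shift (s + 1)).isPathSeq.injOn
  have hclose : s(g m, g 0) = s(u, v) := by
    have hlast : g m = f s := by
      rw [← hf.add_period s]
      exact congrArg f (by lia)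
    exact hlast ▸ hends hs
  have hg : IsPathSeq G m g := by
    refine ⟨hinj, fun t ht => ?_⟩
    by_contra hbad
    rcases Sym2.eq_iff.1 ((hends hbad).trans hclose.symm) with ⟨h, -⟩ | ⟨h, h'⟩
    · exact ht.ne (hinj ht.le (Set.mem_Iic.2 le_rfl) h)
    · have := hinj ht.le (Set.mem_Iic.2 m.zero_le) h
      have := hinj ht (Set.mem_Iic.2 le_rfl) h'
      lia
  refine hg.hasCycleLen_of_degree_compl_add_lt (by lia) ?_
  rcases Sym2.eq_iff.1 hclose with ⟨h, h'⟩ | ⟨h, h'⟩ <;> rw [h, h'] <;> lia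

end Closure

section NonHamiltonian

variable {V : Type} [Fintype V] {G : SimpleGraph V}

lemma exists_maximal_not_hasCycleLen_card (hG : ¬ HasCycleLen G (Fintype.card V)) :
    ∃ H ≥ G, ∃ _ : DecidableRel H.Adj, ¬ HasCycleLen H (Fintype.card V) ∧
      ∀ u v, u ≠ v → ¬ H.Adj u v → H.degree u + H.degree v < Fintype.card V := by
  classical
  obtain ⟨H, hGH, hH⟩ := Set.Finite.exists_le_maximal
    (Set.toFinite {H : SimpleGraph V | ¬ HasCycleLen H (Fintype.card V)}) hG
  refine ⟨H, hGH, inferInstance, hH.prop, fun u v huv hadj => ?_⟩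
  have hcyc : HasCycleLen (H ⊔ edge u v) (Fintype.card V) := by
    by_contra hnot
    have hle := hH.le_of_ge hnot le_sup_left
    exact hadj (hle (.inr ((edge_adj ..).2 ⟨.inl ⟨rfl, rfl⟩, huv⟩)))
  by_contra! hdeg
  refine hH.prop (hcyc.of_sup_edge ?_)
  have hu := H.degree_lt_card_verts u
  have hv := H.degree_lt_card_verts v
  rw [degree_compl, degree_compl]
  lia

/-- The set of low-degree vertices is the non-neighbourhood of `v` for a nonadjacent pair `u`, `v`
of largest degree sum in an edge-maximal non-Hamiltonian supergraph. -/
lemma exists_many_low_degree_of_not_hasCycleLen_card [DecidableRel G.Adj]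
    (h3 : 3 ≤ Fintype.card V) (hG : ¬ HasCycleLen G (Fintype.card V)) :
    ∃ h, G.minDegree ≤ h ∧ 2 * h < Fintype.card V ∧ h ≤ #{w | G.degree w ≤ h} := by
  classical
  obtain ⟨H, hGH, _, hH, hdeg⟩ := exists_maximal_not_hasCycleLen_card hG
  let pairs : Finset (V × V) := {e | e.1 ≠ e.2 ∧ ¬ H.Adj e.1 e.2}
  have hpairs : pairs.Nonempty := by
    by_contra hempty
    refine hH (hasCycleLen_of_isClique (Q := Finset.univ) (fun a _ b _ hab => ?_) h3 le_rfl)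
    by_contra hadj
    exact hempty ⟨(a, b), by simp [pairs, hab, hadj]⟩
  obtain ⟨⟨u, v⟩, huv, hmax⟩ := pairs.exists_max_image (fun e => H.degree e.1 + H.degree e.2) hpairs
  wlog hle : H.degree u ≤ H.degree v generalizing u v
  · exact this v u (by simpa [pairs, H.adj_comm, eq_comm] using huv)
      (fun e he => (hmax e he).trans_eq (add_comm _ _)) (le_of_not_ge hle)
  simp only [pairs, Finset.mem_filter, Finset.mem_univ, true_and] at huv hmax
  have hsum := hdeg u v huv.1 huv.2
  refine ⟨H.degree u, (G.minDegree_le_degree u).trans (degree_le_of_le hGH), by lia, ?_⟩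
  calc H.degree u ≤ Hᶜ.degree v := by rw [degree_compl]; lia
    _ ≤ #{w | G.degree w ≤ H.degree u} := Finset.card_le_card fun w hw => by
      have hvw : v ≠ w ∧ ¬ H.Adj v w := by simpa using hw
      have hw_le := hmax (w, v) ⟨hvw.1.symm, fun h => hvw.2 h.symm⟩
      have := degree_le_of_le hGH (v := w)
      simp only [Finset.mem_filter, Finset.mem_univ, true_and]
      lia

end NonHamiltonian

section EdgeBounds

variable {V : Type} [Fintype V] {G : SimpleGraph V} [DecidableRel G.Adj]

lemma card_edgeFinset_add_card_edgeFinset_compl [DecidableEq V] :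
    #G.edgeFinset + #Gᶜ.edgeFinset = (Fintype.card V).choose 2 := by
  calc #G.edgeFinset + #Gᶜ.edgeFinset = #(G.edgeFinset ∪ Gᶜ.edgeFinset) :=
      (Finset.card_union_of_disjoint (disjoint_edgeFinset.2 disjoint_compl_right)).symm
    _ = #(⊤ : SimpleGraph V).edgeFinset := by
      rw [← edgeFinset_sup]
      congr!
      exact sup_compl_eq_top
    _ = _ := card_edgeFinset_top_eq_card_choose_two

lemma card_edgeFinset_le_of_subset_or_subset {S T : Finset V}
    (hST : ∀ u v, G.Adj u v → u ∈ S ∧ v ∈ S ∨ u ∈ T ∧ v ∈ T) :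
    #G.edgeFinset ≤ (#S).choose 2 + (#T).choose 2 := by
  classical
  have hcover : G.edgeFinset ⊆
      S.offDiag.image (fun e => s(e.1, e.2)) ∪ T.offDiag.image (fun e => s(e.1, e.2)) := by
    intro e
    induction e with
    | h u v =>
      intro he
      have huv := mem_edgeFinset.1 he
      rw [Finset.mem_union, Finset.mem_image, Finset.mem_image]
      refine (hST u v huv).imp (fun h => ?_) fun h => ?_ <;>
        exact ⟨(u, v), Finset.mem_offDiag.2 ⟨h.1, h.2, huv.ne⟩, rfl⟩
  exact ((Finset.card_le_card hcover).trans (Finset.card_union_le _ _)).trans_eq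
    (congrArg₂ _ (Sym2.card_image_offDiag S) (Sym2.card_image_offDiag T))

lemma card_edgeFinset_le_of_degree_le [DecidableEq V] {W : Finset V} {d : ℕ}
    (hW : ∀ w ∈ W, G.degree w ≤ d) : #G.edgeFinset ≤ (#Wᶜ).choose 2 + #W * d := by
  have hcover : G.edgeFinset ⊆
      (Wᶜ).offDiag.image (fun e => s(e.1, e.2)) ∪ W.biUnion fun w => G.incidenceFinset w := by
    intro e
    induction e with
    | h u v =>
      intro he
      have huv := mem_edgeFinset.1 he
      have hinc {w : V} (hw : w ∈ W) (hwe : w ∈ s(u, v)) :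
          s(u, v) ∈ W.biUnion fun w => G.incidenceFinset w :=
        Finset.mem_biUnion.2 ⟨w, hw, (G.mem_incidenceFinset w _).2 ⟨huv, hwe⟩⟩
      rw [Finset.mem_union]
      by_cases hu : u ∈ W
      · exact .inr (hinc hu (Sym2.mem_mk_left u v))
      by_cases hv : v ∈ W
      · exact .inr (hinc hv (Sym2.mem_mk_right u v))
      · exact .inl (Finset.mem_image.2 ⟨(u, v), by simp [hu, hv, huv.ne], rfl⟩)
  calc #G.edgeFinset ≤ _ := (Finset.card_le_card hcover).trans (Finset.card_union_le _ _)
    _ ≤ _ := by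
      gcongr
      · exact (Sym2.card_image_offDiag Wᶜ).le
      · refine Finset.card_biUnion_le.trans (Finset.sum_le_card_nsmul _ _ _ fun w hw => ?_)
        simpa only [card_incidenceFinset_eq_degree] using hW w hw

end EdgeBounds

section Erdos

/-- The right-hand side is concave in `h`, so it suffices to check it at the ends `K + 1` and
`(n - 1) / 2` of the range of `h`. -/
lemma quadratic_gap_pos {n h K : ℚ} (hK : 0 ≤ K) (hKint : K ≤ 7 ∨ 8 ≤ K)
    (hn : 6 * K + 5 ≤ n) (hnK : (K + 2) * (K + 3) ≤ 2 * n) (hKh : K + 1 ≤ h)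
    (hhn : 2 * h ≤ n - 1) : 0 < (2 * n - 1) * h - 3 * h ^ 2 - 2 * K * (n - 1 - K) := by
  rcases le_total (3 * (h + K + 1)) (2 * n - 1) with _ | hge
  · have hleft : 0 ≤ (h - (K + 1)) * (2 * n - 1 - 3 * (h + K + 1)) :=
      mul_nonneg (by linarith) (by linarith)
    linarith
  · have hright : 0 ≤ ((n - 1) / 2 - h) * (3 * ((n - 1) / 2 + h) - (2 * n - 1)) :=
      mul_nonneg (by linarith) (by linarith)
    have hvalue : 0 < (n - 4 * K) ^ 2 - (8 * K ^ 2 - 8 * K + 1) := by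
      -- The linear bound on `n` suffices for `K ≤ 7`, the quadratic one for `K ≥ 8`.
      rcases hKint with _ | hK8
      · nlinarith
      · nlinarith
    linarith

lemma choose_two_add_sq_lt {n h K : ℕ} (hn : 6 * K + 5 ≤ n) (hnK : (K + 2) * (K + 3) ≤ 2 * n)
    (hKh : K + 1 ≤ h) (hhn : 2 * h < n) :
    (n - h).choose 2 + h * h < (n - K).choose 2 + (K + 1).choose 2 := by
  have hgap := quadratic_gap_pos (n := n) (h := h) (K := K) (by positivity)
    (by exact_mod_cast (le_or_gt K 7)) (by exact_mod_cast hn) (by exact_mod_cast hnK)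
    (by exact_mod_cast hKh) (by rw [le_sub_iff_add_le]; exact_mod_cast hhn)
  rw [← Nat.cast_lt (α := ℚ)]
  push_cast [Nat.cast_choose_two, Nat.cast_sub (show h ≤ n by lia),
    Nat.cast_sub (show K ≤ n by lia)]
  linarith

/-- Erdős' theorem on Hamiltonian cycles, in the range where the extremal graph is determined by
the minimum degree. -/
theorem hasCycleLen_card_of_minDegree {V : Type} [Fintype V] {G : SimpleGraph V}
    [DecidableRel G.Adj] {K : ℕ} (hn : 6 * K + 5 ≤ Fintype.card V)
    (hnK : (K + 2) * (K + 3) ≤ 2 * Fintype.card V) (hδ : K + 1 ≤ G.minDegree)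
    (hE : (Fintype.card V - K).choose 2 + (K + 1).choose 2 ≤ #G.edgeFinset) :
    HasCycleLen G (Fintype.card V) := by
  classical
  by_contra hnot
  obtain ⟨h, hδh, hhn, hlow⟩ := exists_many_low_degree_of_not_hasCycleLen_card (by lia) hnot
  obtain ⟨W, hW, hWh⟩ := Finset.exists_subset_card_eq hlow
  have hupper := card_edgeFinset_le_of_degree_le (G := G) (W := W) (d := h)
    fun w hw => (Finset.mem_filter.1 (hW hw)).2
  rw [Finset.card_compl, hWh] at hupper
  exact (choose_two_add_sq_lt hn hnK (hδ.trans hδh) hhn).not_ge (hE.trans hupper)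

end Erdos

section Pancyclic

variable {V : Type} [Fintype V] {G : SimpleGraph V}

lemma IsCycleSeq.exists_degree_add_degree_lt {H : SimpleGraph V} [DecidableRel H.Adj] {l d : ℕ}
    {f : ℕ → V} (hf : IsCycleSeq G l f) (hH : 4 * #H.edgeFinset < l * d) :
    ∃ s, H.degree (f s) + H.degree (f (s + 1)) < d := by
  have hrotate : ∑ s ∈ Finset.range l, H.degree (f (s + 1)) =
      ∑ s ∈ Finset.range l, H.degree (f s) := by
    have hends := (Finset.sum_range_succ' (fun s => H.degree (f s)) l).symm.trans
      (Finset.sum_range_succ (fun s => H.degree (f s)) l)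
    have hperiod := hf.add_period 0
    rw [zero_add] at hperiod
    rwa [hperiod, Nat.add_right_cancel_iff] at hends
  have hbound : ∑ s ∈ Finset.range l, H.degree (f s) ≤ 2 * #H.edgeFinset := by
    classical
    rw [← sum_degrees_eq_twice_card_edges, ← Finset.sum_image (g := f) (f := fun v => H.degree v)
      (hf.injOn_Iio.mono fun _ => Finset.mem_range.1)]
    exact Finset.sum_le_sum_of_subset (Finset.subset_univ _)
  obtain ⟨s, -, hs⟩ := Finset.exists_lt_of_sum_lt (s := Finset.range l)
    (f := fun s => H.degree (f s) + H.degree (f (s + 1))) (g := fun _ => d) (by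
      rw [Finset.sum_add_distrib, hrotate, Finset.sum_const, Finset.card_range, smul_eq_mul]
      lia)
  exact ⟨s, hs⟩

variable [DecidableEq V] [DecidableRel G.Adj]

/-- For each inner position `j` the edges `p 0 – p j` and `p m – p (τ j)` together produce a cycle
of length `l`, where `τ` rotates the inner positions by `l - 3`. -/
lemma IsPathSeq.hasCycleLen_of_le {m l : ℕ} {p : ℕ → V} (hp : IsPathSeq G m p)
    (hclose : G.Adj (p m) (p 0)) (hdeg : Gᶜ.degree (p 0) + Gᶜ.degree (p m) + 1 < m) (hl : 3 ≤ l)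
    (hlm : l ≤ m + 1) : HasCycleLen G l := by
  let τ : ℕ → ℕ := fun j => if j + (l - 3) < m then j + (l - 3) else j + l - (m + 2)
  have hτ : ∀ j ∈ Finset.Ico 1 m, τ j < m := by grind
  have hinner : ∀ j ∈ Finset.Ico 1 m, j ∈ Set.Iic m := by grind
  obtain ⟨j, hj, h0, hm⟩ := exists_adj_and_adj_of_degree_compl_add_lt (G := G)
    (I := Finset.Ico 1 m) (φ := p) (ψ := p ∘ τ) (u := p 0) (v := p m)
    (hp.injOn.mono hinner)
    (hp.injOn.comp (fun i hi j hj hij => by grind) fun j hj => (hτ j hj).le)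
    (fun j hj h => by
      have := hp.injOn (hinner j hj) m.zero_le h
      grind)
    (fun j hj h => (hτ j hj).ne (hp.injOn (hτ j hj).le (Set.mem_Iic.2 le_rfl) h))
    (by rw [Nat.card_Ico]; lia)
  obtain ⟨hj1, hjm⟩ := Finset.mem_Ico.1 hj
  by_cases hshort : j + (l - 3) < m
  · simp only [Function.comp_apply, τ, if_pos hshort] at hm
    have hcyc := hp.hasCycleLen_of_shortcut hj1 hshort hclose h0 hm
    rwa [Nat.sub_add_cancel hl] at hcyc
  · simp only [Function.comp_apply, τ, if_neg hshort] at hm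
    convert hp.hasCycleLen_of_crossing (by lia) hjm.le h0 hm (by lia) using 1
    lia

/-- Two consecutive vertices of the cycle have few non-neighbours on average, so some two of them
leave a crossing or a shortcut of every length. -/
lemma HasCycleLen.of_le_of_card_edgeFinset_compl {c l : ℕ} (hc : HasCycleLen G c)
    (hE : 4 * #Gᶜ.edgeFinset < c * (c - 2)) (hl : 3 ≤ l) (hlc : l ≤ c) : HasCycleLen G l := by
  have hc3 := hc.three_le
  obtain ⟨m, rfl⟩ : ∃ m, c = m + 1 := ⟨c - 1, by lia⟩
  obtain ⟨f, hf⟩ := hc.exists_isCycleSeq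
  obtain ⟨s, hs⟩ := hf.exists_degree_add_degree_lt hE
  have hlast : f (s + 1 + m) = f s := by
    rw [← hf.add_period s]
    exact congrArg f (by lia)
  have hg := hf.shift (s + 1)
  refine hg.isPathSeq.hasCycleLen_of_le hg.adj_last_zero ?_ hl hlc
  rw [hlast, add_zero]
  lia

end Pancyclic

section CliquePair

variable {V W : Type} {G : SimpleGraph V} {x : V} {B : Finset V}

/-- `G` is the union of the cliques on `Bᶜ` and `insert x B`, which share only the vertex `x`: the
graph `L_{n,k}` with `k = #B`, without a fixed labelling of the vertices. -/
structure IsCliquePair (G : SimpleGraph V) (x : V) (B : Finset V) : Prop where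
  notMem : x ∉ B
  adj_iff : ∀ u w, u ≠ w → (G.Adj u w ↔ u = x ∨ w = x ∨ (u ∈ B ↔ w ∈ B))

lemma exists_isCliquePair_Lgraph {n k : ℕ} (hk : k < n) :
    ∃ x B, #B = k ∧ IsCliquePair (Lgraph n k) x B := by
  refine ⟨⟨0, by lia⟩, ({i | i.val < n - k} : Finset (Fin n))ᶜ, ?_, ?_, fun u w huw => ?_⟩
  · rw [Finset.card_compl, Fintype.card_fin, Fin.card_filter_val_lt]
    lia
  · simpa using hk
  · simp only [Lgraph, fromRel_adj, Finset.mem_compl, Finset.mem_filter, Finset.mem_univ, true_and,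
      Fin.ext_iff]
    grind

lemma exists_equiv_map_eq_and_mem_iff [Fintype V] [Fintype W] {y : W} {C : Finset W}
    (hVW : Fintype.card V = Fintype.card W) (hBC : #B = #C) (hx : x ∉ B) (hy : y ∉ C) :
    ∃ e : V ≃ W, e x = y ∧ ∀ v, e v ∈ C ↔ v ∈ B := by
  classical
  have hfib (b : Bool) : Fintype.card {v // decide (v ∈ B) = b} =
      Fintype.card {w // decide (w ∈ C) = b} := by
    cases b <;> simp [Fintype.card_subtype_compl, hVW, hBC]
  let e := Equiv.ofFiberEquiv fun b => Fintype.equivOfCardEq (hfib b)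
  have he (v : V) : e v ∈ C ↔ v ∈ B := by
    exact decide_eq_decide.1 (Equiv.ofFiberEquiv_map
      (f := fun v => decide (v ∈ B)) (g := fun w => decide (w ∈ C)) _ v)
  refine ⟨e.trans (Equiv.swap (e x) y), Equiv.swap_apply_left _ _, fun v => ?_⟩
  have hex : e x ∉ C := by rwa [he]
  rw [← he, Equiv.trans_apply, Equiv.swap_apply_def]
  grind

lemma IsCliquePair.nonempty_iso [Fintype V] [Fintype W] {H : SimpleGraph W} {y : W}
    {C : Finset W} (hG : IsCliquePair G x B) (hH : IsCliquePair H y C)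
    (hVW : Fintype.card V = Fintype.card W) (hBC : #B = #C) : Nonempty (G ≃g H) := by
  obtain ⟨e, hex, heB⟩ := exists_equiv_map_eq_and_mem_iff hVW hBC hG.notMem hH.notMem
  refine ⟨e, fun {u w} => ?_⟩
  rcases eq_or_ne u w with rfl | huw
  · simp
  rw [hH.adj_iff _ _ (e.injective.ne huw), hG.adj_iff u w huw, ← hex]
  simp only [e.apply_eq_iff_eq, heB]

lemma IsCliquePair.nonempty_iso_Lgraph [Fintype V] (h : IsCliquePair G x B) :
    Nonempty (G ≃g Lgraph (Fintype.card V) #B) := by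
  have hB : #B < Fintype.card V := Finset.card_lt_univ_of_notMem h.notMem
  obtain ⟨y, C, hC, hL⟩ := exists_isCliquePair_Lgraph hB
  exact h.nonempty_iso hL (Fintype.card_fin _).symm hC.symm

lemma IsCliquePair.card_edgeFinset_le [Fintype V] [DecidableRel G.Adj]
    (h : IsCliquePair G x B) :
    #G.edgeFinset ≤ (Fintype.card V - #B).choose 2 + (#B + 1).choose 2 := by
  classical
  rw [← Finset.card_compl, ← Finset.card_insert_of_notMem h.notMem]
  refine card_edgeFinset_le_of_subset_or_subset fun u w huw => ?_
  have hx := h.notMem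
  have hor := (h.adj_iff u w huw.ne).1 huw
  simp only [Finset.mem_compl, Finset.mem_insert]
  grind

variable [DecidableEq V]

lemma IsCliquePair.isClique_compl [Fintype V] (h : IsCliquePair G x B) :
    G.IsClique (Bᶜ : Finset V) := by
  intro u hu w hw huw
  simp only [Finset.coe_compl, Set.mem_compl_iff, Finset.mem_coe] at hu hw
  exact (h.adj_iff u w huw).2 (by simp [hu, hw])

lemma IsCliquePair.isClique_map_compl [Fintype V] {v : V} {a : ({v}ᶜ : Set V)}
    {A : Finset ({v}ᶜ : Set V)} (h : IsCliquePair (G.induce {v}ᶜ) a A) :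
    G.IsClique (Aᶜ.map (.subtype _) : Finset V) := by
  rw [Finset.coe_map]
  exact h.isClique_compl.map.mono (map_comap_le _ _)

lemma IsCliquePair.of_induce_compl_singleton {v : V} {a : ({v}ᶜ : Set V)}
    {A : Finset ({v}ᶜ : Set V)} (h : IsCliquePair (G.induce {v}ᶜ) a A)
    (hv : ∀ w : ({v}ᶜ : Set V), G.Adj v w ↔ w = a ∨ w ∈ A) :
    IsCliquePair G a (insert v (A.map (.subtype _))) where
  notMem := by
    have ha : (a : V) ≠ v := a.2
    simpa [ha] using h.notMem
  adj_iff u w huw := by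
    have hmem (z : ({v}ᶜ : Set V)) : (z : V) ∈ insert v (A.map (.subtype _)) ↔ z ∈ A := by
      have hz : (z : V) ≠ v := z.2
      simp [hz]
    have hva : v ≠ a := fun hva => a.2 hva.symm
    by_cases hu : u = v
    · subst hu
      lift w to ({u}ᶜ : Set V) using huw.symm
      simp [hv, hmem, hva, Subtype.coe_inj]
    lift u to ({v}ᶜ : Set V) using hu
    by_cases hw : w = v
    · subst hw
      simp [G.adj_comm, hv, hmem, hva, Subtype.coe_inj]
    lift w to ({v}ᶜ : Set V) using hw
    rw [hmem, hmem, Subtype.coe_inj, Subtype.coe_inj]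
    exact h.adj_iff u w fun huw' => huw (congrArg _ huw')

end CliquePair

section Extension

variable {V : Type} [Fintype V] {G : SimpleGraph V} [DecidableRel G.Adj] {v : V}

lemma card_compl_singleton [DecidableEq V] (v : V) :
    Fintype.card ({v}ᶜ : Set V) = Fintype.card V - 1 := by
  rw [Fintype.card_compl_set, Set.card_singleton]

lemma card_compl_add_one_of_notMem [DecidableEq V] {a : ({v}ᶜ : Set V)} {A : Finset ({v}ᶜ : Set V)}
    (ha : a ∉ A) : #Aᶜ + 1 = Fintype.card V - #A := by
  have hA := Finset.card_lt_univ_of_notMem ha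
  rw [card_compl_singleton] at hA
  rw [Finset.card_compl, card_compl_singleton]
  lia

lemma card_edgeFinset_induce_compl_singleton_add_degree [DecidableEq V] (v : V) :
    #(G.induce {v}ᶜ).edgeFinset + G.degree v = #G.edgeFinset := by
  rw [card_edgeFinset_induce_compl_singleton, card_edgeFinset_deleteIncidenceSet,
    Nat.sub_add_cancel (G.degree_le_card_edgeFinset v)]

lemma card_filter_adj_compl_singleton [DecidableEq V] (v : V) :
    #{w : ({v}ᶜ : Set V) | G.Adj v w} = G.degree v := by
  rw [← card_neighborFinset_eq_degree, ← Finset.card_map (.subtype _)]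
  congr 1
  ext w
  simpa [eq_comm] using Adj.ne

lemma IsCliquePair.exists_extension {x : ({v}ᶜ : Set V)} {A : Finset ({v}ᶜ : Set V)}
    (h : IsCliquePair (G.induce {v}ᶜ) x A) (hA : #A < G.degree v) :
    (∃ l, Fintype.card V - #A ≤ l ∧ HasCycleLen G l) ∨
      ∃ y C, #C = #A + 1 ∧ IsCliquePair G y C := by
  classical
  let Q : Finset V := Aᶜ.map (.subtype _)
  have hQ : G.IsClique Q := h.isClique_map_compl
  have hQcard : #Q + 1 = Fintype.card V - #A :=
    (congrArg (· + 1) (Finset.card_map _)).trans (card_compl_add_one_of_notMem h.notMem)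
  have hvQ : v ∉ Q := by simp [Q]
  have hmem {w : ({v}ᶜ : Set V)} (hw : w ∉ A) : (w : V) ∈ Q := by
    simpa [Q] using ⟨w.2, hw⟩
  rw [← card_filter_adj_compl_singleton] at hA
  let N : Finset ({v}ᶜ : Set V) := {w | G.Adj v w}
  obtain ⟨a, haN, haA⟩ := Finset.exists_mem_notMem_of_card_lt_card hA
  have hva : G.Adj v a := (Finset.mem_filter.1 haN).2
  by_cases hother : ∃ b ∈ N, b ∉ A ∧ b ≠ a
  · obtain ⟨b, hbN, hbA, hba⟩ := hother
    left
    exact ⟨_, hQcard.ge, hasCycleLen_card_add_one_of_isClique hQ (hmem haA) (hmem hbA)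
      (Subtype.coe_injective.ne hba.symm) hvQ hva (Finset.mem_filter.1 hbN).2⟩
  push Not at hother
  have hN : N = insert a A := Finset.eq_of_subset_of_card_le (fun b hb => by grind) (by
    rwa [Finset.card_insert_of_notMem haA])
  have hvN (w : ({v}ᶜ : Set V)) : G.Adj v w ↔ w = a ∨ w ∈ A := by
    rw [← Finset.mem_insert, ← hN, Finset.mem_filter_univ]
  by_cases hax : a = x ∨ A = ∅
  · right
    refine ⟨a, _, ?_, IsCliquePair.of_induce_compl_singleton (A := A) ?_ hvN⟩
    · simp
    · refine ⟨haA, fun u w huw => (h.adj_iff u w huw).trans ?_⟩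
      rcases hax with rfl | rfl <;> simp
  · left
    push Not at hax
    obtain ⟨w, hwA⟩ := hax.2
    refine ⟨_, ?_, hasCycleLen_card_add_two_of_isClique hQ (hmem haA) (hmem h.notMem)
      (Subtype.coe_injective.ne hax.1) hvQ (w := w) (by simp [Q, hwA]) hva
      ((hvN w).2 (.inr hwA)).symm ?_⟩
    · lia
    · exact (h.adj_iff w x (ne_of_mem_of_not_mem hwA h.notMem)).2 (.inr (.inl rfl))

end Extension

theorem woodall_stability {K : ℕ} {V : Type} [Fintype V] {G : SimpleGraph V} [DecidableRel G.Adj]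
    (hn : 6 * K + 5 ≤ Fintype.card V) (hnK : (K + 2) * (K + 3) ≤ 2 * Fintype.card V)
    (hE : (Fintype.card V - K).choose 2 + (K + 1).choose 2 ≤ #G.edgeFinset) :
    (∃ l, Fintype.card V - K < l ∧ HasCycleLen G l) ∨ ∃ x B, #B = K ∧ IsCliquePair G x B := by
  classical
  induction K generalizing V with
  | zero =>
    have hcompl := card_edgeFinset_add_card_edgeFinset_compl (G := G)
    have hGc : #Gᶜ.edgeFinset = 0 := by rw [Nat.sub_zero] at hE; lia
    rw [Finset.card_eq_zero, edgeFinset_eq_empty, compl_eq_bot] at hGc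
    obtain ⟨x⟩ : Nonempty V := Fintype.card_pos_iff.1 (by lia)
    exact .inr ⟨x, ∅, rfl, by simp, fun u w huw => by simp [hGc, huw]⟩
  | succ K ih =>
    by_cases hδ : K + 2 ≤ G.minDegree
    · exact .inl ⟨_, by lia, hasCycleLen_card_of_minDegree hn hnK hδ hE⟩
    have : Nonempty V := Fintype.card_pos_iff.1 (by lia)
    obtain ⟨v, hv⟩ := G.exists_minimal_degree_vertex
    have hcard := card_compl_singleton v
    have hE' := card_edgeFinset_induce_compl_singleton_add_degree (G := G) v
    have hchoose : (K + 2).choose 2 = (K + 1).choose 2 + (K + 1) := by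
      rw [Nat.choose_succ_succ', Nat.choose_one_right, add_comm]
    have hsub : Fintype.card V - 1 - K = Fintype.card V - (K + 1) := by lia
    rcases ih (G := G.induce {v}ᶜ) (by lia) (by grind) (by rw [hcard, hsub]; lia) with
      ⟨l, hl, hcyc⟩ | ⟨x, A, rfl, hA⟩
    · exact .inl ⟨l, by lia, hcyc.of_isContained ⟨.induce G _⟩⟩
    · have hAv : #A < G.degree v := by
        have := hA.card_edgeFinset_le
        rw [hcard, hsub] at this
        lia
      rcases hA.exists_extension hAv with ⟨l, hl, hcyc⟩ | hpair
      · exact .inl ⟨l, by lia, hcyc⟩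
      · exact .inr hpair

section Circumference

variable {V : Type} [Finite V] {G : SimpleGraph V} {l : ℕ}

lemma bddAbove_setOf_hasCycleLen : BddAbove {l | HasCycleLen G l} := by
  cases nonempty_fintype V
  exact ⟨Fintype.card V, fun _ h => h.le_card⟩

lemma HasCycleLen.le_circumference (h : HasCycleLen G l) : l ≤ circumference G :=
  le_csSup bddAbove_setOf_hasCycleLen h

lemma hasCycleLen_circumference (hpos : 0 < circumference G) : HasCycleLen G (circumference G) :=
  Nat.sSup_mem (Set.nonempty_iff_ne_empty.2 fun hempty =>
    hpos.ne' ((congrArg sSup hempty).trans csSup_empty)) bddAbove_setOf_hasCycleLen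

end Circumference

lemma four_mul_card_edgeFinset_compl_lt {V : Type} [Fintype V] [DecidableEq V]
    {G : SimpleGraph V} [DecidableRel G.Adj] {k c : ℕ} (hk : 5 * k + 4 < Fintype.card V)
    (hE : (Fintype.card V - (k + 1)).choose 2 + (k + 2).choose 2 ≤ #G.edgeFinset)
    (hc : Fintype.card V - k ≤ c) : 4 * #Gᶜ.edgeFinset < c * (c - 2) := by
  have htotal := card_edgeFinset_add_card_edgeFinset_compl (G := G)
  obtain ⟨m, hm⟩ : ∃ m, Fintype.card V = m + 1 + (k + 1) := ⟨Fintype.card V - (k + 2), by lia⟩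
  have hsplit : (m + 1 + (k + 1)).choose 2 =
      (m + 1).choose 2 + (k + 2).choose 2 + (k + 1) * m := by
    rw [← Nat.cast_inj (R := ℚ)]
    push_cast [Nat.cast_choose_two]
    ring
  rw [hm, Nat.add_sub_cancel] at hE
  rw [hm, hsplit] at htotal
  calc 4 * #Gᶜ.edgeFinset ≤ 4 * (k + 1) * m := by rw [mul_assoc]; lia
    _ < c * m := Nat.mul_lt_mul_of_pos_right (by lia) (by lia)
    _ ≤ c * (c - 2) := Nat.mul_le_mul_left _ (by lia)

theorem woodall_refined_general {V : Type} [Fintype V] {n : ℕ} (hV : Fintype.card V = n) (k : ℕ)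
    (G : SimpleGraph V) (hn1 : 6 * k + 11 ≤ n) (hn2 : (k + 3) * (k + 4) / 2 ≤ n)
    (he : (n - k - 1).choose 2 + (k + 2).choose 2 ≤ edgeCount G) :
    WeaklyPancyclic3 G ∧
      ((∀ l : ℕ, 3 ≤ l → l ≤ n - k → HasCycleLen G l) ∨
        Nonempty (G ≃g Lgraph n (k + 1))) := by
  classical
  subst hV
  have hE : (Fintype.card V - (k + 1)).choose 2 + (k + 2).choose 2 ≤ #G.edgeFinset := by
    rwa [edgeCount, Nat.card_eq_fintype_card, ← edgeFinset_card] at he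
  have hn2' : (k + 1 + 2) * (k + 1 + 3) ≤ 2 * Fintype.card V := by
    have heven := Nat.div_mul_cancel (Nat.even_mul_succ_self (k + 3)).two_dvd
    lia
  by_cases hlong : Fintype.card V - k ≤ circumference G
  · have hall : ∀ l, 3 ≤ l → l ≤ circumference G → HasCycleLen G l := fun l =>
      (hasCycleLen_circumference (by lia)).of_le_of_card_edgeFinset_compl
        (four_mul_card_edgeFinset_compl_lt (by lia) hE hlong)
    exact ⟨⟨hall 3 le_rfl (by lia), hall⟩, .inl fun l h3 hl => hall l h3 (hl.trans hlong)⟩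
  · obtain ⟨l, hl, hcyc⟩ | ⟨x, B, hB, hpair⟩ :=
      woodall_stability (K := k + 1) (by lia) hn2' hE
    · exact absurd hcyc.le_circumference (by lia)
    have hclique {l : ℕ} (h3 : 3 ≤ l) (hl : l < Fintype.card V - k) : HasCycleLen G l :=
      hasCycleLen_of_isClique hpair.isClique_compl h3 (by rw [Finset.card_compl]; lia)
    exact ⟨⟨hclique le_rfl (by lia), fun l h3 hl => hclique h3 (by lia)⟩,
      .inr (hB ▸ hpair.nonempty_iso_Lgraph)⟩

/-- Refined Woodall theorem (Theorem 2.1). -/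
theorem woodall_refined (k n : ℕ) (G : SimpleGraph (Fin n))
    (hn1 : 6 * k + 11 ≤ n) (hn2 : (k + 3) * (k + 4) / 2 ≤ n)
    (he : (n - k - 1).choose 2 + (k + 2).choose 2 ≤ edgeCount G) :
    WeaklyPancyclic3 G ∧
      ((∀ l : ℕ, 3 ≤ l → l ≤ n - k → HasCycleLen G l) ∨
        Nonempty (G ≃g Lgraph n (k + 1))) :=
  woodall_refined_general (Fintype.card_fin n) k G hn1 hn2 he
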